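/- For every integer n ≥ 1, every integer r with 0 ≤ r ≤ n−1, and every ε ∈ (0, 1/2], the expected occupancy probability satisfies E M_{n,r} ≥ C(n,r)·ν(ε)·ε^{r+1}·(1 − p_⋆)^{n−r} + 2^{−r}·C(n,r)·∫_0^ε (1 − κ₋(2u))·ν(u)·u^r·(1 − 2u)^{n−r} du, where p_⋆ = max{p_a : a ∈ 𝒜} and κ₋(ε) = sup_{0<u≤ε} ν(u)/ν(u/2). Consequently E M_{n,r} ≥ sup_{0<ε≤1/2} of the right-hand side. -/

import Mathlib

open MeasureTheory

/-- The expected occupancy probability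
`E M_{n,r} = C(n,r) ∑_a p_a^{r+1} (1 - p_a)^{n-r}`. -/
noncomputable def expOcc {A : Type*} (p : A → ℝ) (n r : ℕ) : ℝ :=
  (n.choose r : ℝ) * ∑' a, p a ^ (r + 1) * (1 - p a) ^ (n - r)

/-- `κ₋(ε) = sup_{0 < u ≤ ε} ν(u)/ν(u/2)`. -/
noncomputable def kminus (ν : ℝ → ℝ) (ε : ℝ) : ℝ :=
  sSup ((fun u => ν u / ν (u / 2)) '' Set.Ioc (0 : ℝ) ε)


lemma kminus_facts (ν : ℝ → ℝ) (hanti : ∀ x y, 0 < x → x ≤ y → ν y ≤ ν x)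
    (h0 : ∀ x, 0 ≤ ν x) (v : ℝ) (hv : 0 < v) :
    0 ≤ (1 - kminus ν (4 * v)) * ν (2 * v) ∧
    (1 - kminus ν (4 * v)) * ν (2 * v) ≤ ν v - ν (2 * v) := by
  have hb : ∀ y ∈ ((fun u => ν u / ν (u / 2)) '' Set.Ioc (0 : ℝ) (4 * v)), y ≤ 1 := by
    rintro _ ⟨u, hu, rfl⟩
    exact div_le_one_of_le₀ (hanti _ _ (by linarith [hu.1]) (by linarith [hu.1])) (h0 _)
  have hmem : ν (2 * v) / ν v ∈ ((fun u => ν u / ν (u / 2)) '' Set.Ioc (0 : ℝ) (4 * v)) := by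
    refine ⟨2 * v, ⟨by linarith, by linarith⟩, ?_⟩
    simp only
    congr 2
    ring
  have h1 : kminus ν (4 * v) ≤ 1 := csSup_le ⟨_, hmem⟩ hb
  have h2 : ν (2 * v) / ν v ≤ kminus ν (4 * v) := le_csSup ⟨1, hb⟩ hmem
  have h3 : ν (2 * v) ≤ ν v := hanti _ _ hv (by linarith)
  refine ⟨mul_nonneg (by linarith) (h0 _), ?_⟩
  rcases (h0 v).eq_or_lt with h | h
  · have : ν (2 * v) = 0 := le_antisymm (by linarith) (h0 _)
    rw [this, ← h]; simp
  · have h4 : (1 - kminus ν (4 * v)) * ν (2 * v) ≤ (1 - kminus ν (4 * v)) * ν v :=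
      mul_le_mul_of_nonneg_left h3 (by linarith)
    have h5 : ν (2 * v) ≤ kminus ν (4 * v) * ν v := by rwa [div_le_iff₀ h] at h2
    linarith

lemma occ_integral_bound {A : Type*} [Countable A]
    (p : A → ℝ) (hp0 : ∀ a, 0 ≤ p a) (hs : Summable p) (hp1 : ∀ a, p a ≤ 1)
    (ν : ℝ → ℝ) (hν : ∀ ε : ℝ, ν ε = (({a | ε ≤ p a} : Set A).ncard : ℝ))
    (hfin : ∀ x : ℝ, 0 < x → {a | x ≤ p a}.Finite)
    (r m : ℕ) (ε : ℝ) (hε : 0 < ε) (hε2 : ε ≤ 1 / 2)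
    (g : A → ℝ) (hg : ∀ a, g a = if p a < ε then p a ^ (r + 1) * (1 - p a) ^ m else 0)
    (hgs : Summable g) :
    2 * ∫ v in (0 : ℝ)..(ε / 2),
      (1 - kminus ν (4 * v)) * ν (2 * v) * v ^ r * (1 - 4 * v) ^ m ≤ ∑' a, g a := by
  have hanti : ∀ x y, 0 < x → x ≤ y → ν y ≤ ν x := by
    intro x y hx hxy
    rw [hν, hν]
    exact_mod_cast Set.ncard_le_ncard (fun a (ha : y ≤ p a) => (hxy.trans ha : x ≤ p a)) (hfin x hx)
  have hν0 : ∀ x, 0 ≤ ν x := fun x => by rw [hν]; positivity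
  have hg0 : ∀ a, 0 ≤ g a := by
    intro a
    rw [hg]
    split_ifs
    · exact mul_nonneg (pow_nonneg (hp0 a) _) (pow_nonneg (by linarith [hp1 a]) _)
    · exact le_rfl
  set c : A → ℝ := fun a => if p a < ε then p a ^ r * (1 - p a) ^ m else 0 with hc
  have hc0 : ∀ a, 0 ≤ c a := by
    intro a
    simp only [hc]
    split_ifs
    · exact mul_nonneg (pow_nonneg (hp0 a) _) (pow_nonneg (by linarith [hp1 a]) _)
    · exact le_rfl
  have hcg : ∀ a, c a * (p a - p a / 2) = g a / 2 := by
    intro a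
    simp only [hc, hg]
    split_ifs
    · ring
    · simp
  set f : ℝ → ℝ := fun v => (1 - kminus ν (4 * v)) * ν (2 * v) * v ^ r * (1 - 4 * v) ^ m with hf
  have hpt : ∀ v ∈ Set.Ioc (0 : ℝ) (ε / 2), ENNReal.ofReal ‖f v‖ ≤
      ∑' a, (Set.Ioc (p a / 2) (p a)).indicator (fun _ => ENNReal.ofReal (c a)) v := by
    intro v hv
    obtain ⟨hv0, hv1⟩ := hv
    obtain ⟨k0, k1⟩ := kminus_facts ν hanti hν0 v hv0
    have h4 : (0 : ℝ) ≤ 1 - 4 * v := by linarith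
    have hfv0 : 0 ≤ f v := by
      simp only [hf]
      exact mul_nonneg (mul_nonneg k0 (by positivity)) (pow_nonneg h4 _)
    rw [Real.norm_of_nonneg hfv0]
    have hdf : ({a | v ≤ p a} \ {a | 2 * v ≤ p a}).Finite := (hfin v hv0).diff
    have hcard : ν v - ν (2 * v) = (hdf.toFinset.card : ℝ) := by
      have hsub : {a | 2 * v ≤ p a} ⊆ {a | v ≤ p a} := fun a (ha : 2 * v ≤ p a) =>
        (by linarith : v ≤ p a)
      have := Set.ncard_sdiff_add_ncard_of_subset hsub (hfin v hv0)
      rw [hν, hν, ← this, ← Set.ncard_eq_toFinset_card _ hdf]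
      push_cast; ring
    have hle : f v ≤ ∑ a ∈ hdf.toFinset, c a := by
      calc f v ≤ (ν v - ν (2 * v)) * v ^ r * (1 - 2 * v) ^ m := by
            simp only [hf]
            have : (1 - 4 * v) ^ m ≤ (1 - 2 * v) ^ m := by gcongr; linarith
            have h6 : (0:ℝ) ≤ v ^ r := by positivity
            apply mul_le_mul (mul_le_mul_of_nonneg_right k1 h6) this (pow_nonneg h4 _)
            exact mul_nonneg (k0.trans k1) h6
        _ = ∑ a ∈ hdf.toFinset, v ^ r * (1 - 2 * v) ^ m := by
            rw [hcard, Finset.sum_const, nsmul_eq_mul]; ring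
        _ ≤ _ := by
            apply Finset.sum_le_sum
            intro a ha
            simp only [Set.Finite.mem_toFinset, Set.mem_diff, Set.mem_setOf_eq, not_le] at ha
            have : p a < ε := by linarith
            simp only [hc, this, if_true]
            have h7 : (0:ℝ) ≤ 1 - 2 * v := by linarith
            have h8 := hp0 a
            exact mul_le_mul (pow_le_pow_left₀ hv0.le ha.1 _)
              (pow_le_pow_left₀ h7 (by linarith) _) (pow_nonneg h7 _) (pow_nonneg h8 _)
    calc ENNReal.ofReal (f v) ≤ ENNReal.ofReal (∑ a ∈ hdf.toFinset, c a) :=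
          ENNReal.ofReal_le_ofReal hle
      _ = ∑ a ∈ hdf.toFinset, ENNReal.ofReal (c a) :=
          ENNReal.ofReal_sum_of_nonneg (fun a _ => hc0 a)
      _ = ∑ a ∈ hdf.toFinset,
            (Set.Ioc (p a / 2) (p a)).indicator (fun _ => ENNReal.ofReal (c a)) v := by
          apply Finset.sum_congr rfl
          intro a ha
          simp only [Set.Finite.mem_toFinset, Set.mem_diff, Set.mem_setOf_eq, not_le] at ha
          rw [Set.indicator_of_mem]
          exact ⟨by linarith, ha.1⟩
      _ ≤ _ := ENNReal.sum_le_tsum _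
  have hlint : ∫⁻ v in Set.Ioc (0 : ℝ) (ε / 2), ENNReal.ofReal ‖f v‖ ≤
      ENNReal.ofReal (∑' a, g a / 2) := by
    calc _ ≤ ∫⁻ v in Set.Ioc (0 : ℝ) (ε / 2),
          ∑' a, (Set.Ioc (p a / 2) (p a)).indicator (fun _ => ENNReal.ofReal (c a)) v :=
          setLIntegral_mono' measurableSet_Ioc hpt
      _ ≤ ∫⁻ v, ∑' a, (Set.Ioc (p a / 2) (p a)).indicator (fun _ => ENNReal.ofReal (c a)) v :=
          setLIntegral_le_lintegral _ _
      _ = ∑' a, ENNReal.ofReal (g a / 2) := by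
          rw [lintegral_tsum]
          · congr 1
            ext a
            rw [lintegral_indicator_const measurableSet_Ioc, Real.volume_Ioc,
              ← ENNReal.ofReal_mul (hc0 a), hcg]
          · intro a
            exact (measurable_const.indicator measurableSet_Ioc).aemeasurable
      _ = _ := (ENNReal.ofReal_tsum_of_nonneg (fun a => by have := hg0 a; positivity)
            (hgs.div_const 2)).symm
  rw [intervalIntegral.integral_of_le (by linarith)]
  have h1 := norm_integral_le_lintegral_norm (μ := volume.restrict (Set.Ioc (0 : ℝ) (ε / 2))) f
  have h2 := ENNReal.toReal_mono ENNReal.ofReal_ne_top hlint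
  rw [ENNReal.toReal_ofReal (tsum_nonneg fun a => by have := hg0 a; positivity),
    tsum_div_const] at h2
  have h3 := Real.le_norm_self (∫ v in Set.Ioc (0 : ℝ) (ε / 2), f v)
  linarith

/-- Theorem 3 (lower bound): for `n ≥ 1`, `0 ≤ r ≤ n-1` and `ε ∈ (0,1/2]`,
`E M_{n,r} ≥ C(n,r) ν(ε) ε^{r+1} (1-p⋆)^{n-r}
  + 2^{-r} C(n,r) ∫₀^ε (1-κ₋(2u)) ν(u) u^r (1-2u)^{n-r} du`. -/
theorem expected_occupancy_lower_bound
    {A : Type*} [Countable A]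
    (p : A → ℝ) (hp0 : ∀ a, 0 ≤ p a) (hp1 : ∑' a, p a = 1)
    (ν : ℝ → ℝ) (hν : ∀ ε : ℝ, ν ε = (({a | ε ≤ p a} : Set A).ncard : ℝ))
    (pstar : ℝ) (hpstar : IsGreatest (Set.range p) pstar)
    (n r : ℕ) (hn : 1 ≤ n) (hr : r ≤ n - 1)
    (ε : ℝ) (hε : ε ∈ Set.Ioc (0 : ℝ) (1 / 2)) :
    (n.choose r : ℝ) * ν ε * ε ^ (r + 1) * (1 - pstar) ^ (n - r)
      + (2 : ℝ) ^ (-(r : ℤ)) * (n.choose r : ℝ)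
        * ∫ u in (0 : ℝ)..ε,
            (1 - kminus ν (2 * u)) * ν u * u ^ r * (1 - 2 * u) ^ (n - r)
      ≤ expOcc p n r := by
  obtain ⟨hε0, hε2⟩ := hε
  have hs : Summable p := by
    by_contra h
    rw [tsum_eq_zero_of_not_summable h] at hp1
    norm_num at hp1
  have hple : ∀ a, p a ≤ 1 := fun a => hp1 ▸ hs.le_tsum a (fun b _ => hp0 b)
  have hfin : ∀ x : ℝ, 0 < x → {a | x ≤ p a}.Finite := by
    intro x hx
    have := hs.tendsto_cofinite_zero.eventually (gt_mem_nhds hx)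
    rw [Filter.eventually_cofinite] at this
    simpa using this
  obtain ⟨m, hm⟩ : ∃ m, n - r = m := ⟨_, rfl⟩
  unfold expOcc
  rw [hm]
  set f : A → ℝ := fun a => p a ^ (r + 1) * (1 - p a) ^ m with hf
  have hf0 : ∀ a, 0 ≤ f a := fun a =>
    mul_nonneg (pow_nonneg (hp0 a) _) (pow_nonneg (by linarith [hple a]) _)
  have hfp : ∀ a, f a ≤ p a := by
    intro a
    have h1 : p a ^ (r + 1) ≤ p a := pow_le_of_le_one (hp0 a) (hple a) (by omega)
    have h2 : (1 - p a) ^ m ≤ 1 := pow_le_one₀ (by linarith [hple a]) (by linarith [hp0 a])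
    calc f a ≤ p a ^ (r + 1) * 1 := mul_le_mul_of_nonneg_left h2 (pow_nonneg (hp0 a) _)
      _ ≤ p a := by linarith
  have hfs : Summable f := Summable.of_nonneg_of_le hf0 hfp hs
  set g : A → ℝ := fun a => if p a < ε then f a else 0 with hg
  have hgs : Summable g := by
    refine Summable.of_nonneg_of_le (fun a => ?_) (fun a => ?_) hfs
    · simp only [hg]; split_ifs; exacts [hf0 a, le_rfl]
    · simp only [hg]; split_ifs; exacts [le_rfl, hf0 a]
  have hI := occ_integral_bound p hp0 hs hple ν hν hfin r m ε hε0 hε2 g (fun a => rfl) hgs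
  have hsum : ∑' a, g a + ∑ a ∈ (hfin ε hε0).toFinset, f a ≤ ∑' a, f a := by
    have hS : ∑ a ∈ (hfin ε hε0).toFinset, f a = ∑' a, (f a - g a) := by
      rw [tsum_eq_sum (s := (hfin ε hε0).toFinset)]
      · apply Finset.sum_congr rfl
        intro a ha
        simp only [Set.Finite.mem_toFinset, Set.mem_setOf_eq] at ha
        simp [hg, not_lt.mpr ha]
      · intro a ha
        simp only [Set.Finite.mem_toFinset, Set.mem_setOf_eq, not_le] at ha
        simp [hg, ha]
    rw [hS, hfs.tsum_sub hgs]
    linarith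
  have hps1 : pstar ≤ 1 := by
    obtain ⟨a, rfl⟩ := hpstar.1
    exact hple a
  have hfirst : ν ε * ε ^ (r + 1) * (1 - pstar) ^ m ≤ ∑ a ∈ (hfin ε hε0).toFinset, f a := by
    calc _ = ∑ a ∈ (hfin ε hε0).toFinset, ε ^ (r + 1) * (1 - pstar) ^ m := by
          rw [Finset.sum_const, nsmul_eq_mul, hν, Set.ncard_eq_toFinset_card _ (hfin ε hε0)]
          ring
      _ ≤ _ := by
          apply Finset.sum_le_sum
          intro a ha
          simp only [Set.Finite.mem_toFinset, Set.mem_setOf_eq] at ha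
          have h1 : p a ≤ pstar := hpstar.2 ⟨a, rfl⟩
          exact mul_le_mul (pow_le_pow_left₀ hε0.le ha _)
            (pow_le_pow_left₀ (by linarith) (by linarith) _) (pow_nonneg (by linarith) _)
            (pow_nonneg (hp0 a) _)
  have hcv : (2 : ℝ) ^ (-(r : ℤ)) * (∫ u in (0 : ℝ)..ε,
      (1 - kminus ν (2 * u)) * ν u * u ^ r * (1 - 2 * u) ^ m) =
      2 * ∫ v in (0 : ℝ)..(ε / 2),
      (1 - kminus ν (4 * v)) * ν (2 * v) * v ^ r * (1 - 4 * v) ^ m := by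
    have h := intervalIntegral.integral_comp_mul_left (a := 0) (b := ε / 2)
      (fun u => (1 - kminus ν (2 * u)) * ν u * u ^ r * (1 - 2 * u) ^ m) (two_ne_zero (α := ℝ))
    have h2 : ∀ v : ℝ, (1 - kminus ν (2 * (2 * v))) * ν (2 * v) * (2 * v) ^ r
        * (1 - 2 * (2 * v)) ^ m =
        2 ^ r * ((1 - kminus ν (4 * v)) * ν (2 * v) * v ^ r * (1 - 4 * v) ^ m) := by
      intro v
      rw [show 2 * (2 * v) = 4 * v by ring, mul_pow]
      ring
    simp only [h2, intervalIntegral.integral_const_mul, mul_zero, smul_eq_mul] at h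
    rw [show 2 * (ε / 2) = ε by ring] at h
    have h3 : (∫ u in (0 : ℝ)..ε, (1 - kminus ν (2 * u)) * ν u * u ^ r * (1 - 2 * u) ^ m) =
        2 ^ r * (2 * ∫ v in (0 : ℝ)..(ε / 2),
      (1 - kminus ν (4 * v)) * ν (2 * v) * v ^ r * (1 - 4 * v) ^ m) := by linarith
    rw [h3, zpow_neg, zpow_natCast, inv_mul_cancel_left₀ (by positivity)]
  rw [← hcv] at hI
  have hC : (0 : ℝ) ≤ (n.choose r : ℝ) := by positivity
  calc _ = _ := ?_
    _ ≤ _ := mul_le_mul_of_nonneg_left ((add_le_add hfirst hI).trans (by linarith)) hC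
  ring
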